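/- (Lemma 4.5.) Let (v,p,z) be a classical solution of the piezoelectric beam system with magnetic effect and time-varying delay, under assumptions (A1)–(A3) and with ξ̄ > 0 fixed, and define J(t) := ξ̄·τ(t)·∫₀^L∫₀^1 e^{−2τ(t)y}·z(x,y,t)² dy dx. Then for every t > 0, J'(t) ≤ −2J(t) + ξ̄∫₀^L v_t(x,t)² dx. -/

import Mathlib

open MeasureTheory intervalIntegral

/-- Partial derivative of `f : ℝ → ℝ → ℝ` with respect to its first argument. -/
noncomputable def pd1 (f : ℝ → ℝ → ℝ) (x t : ℝ) : ℝ := deriv (fun ξ => f ξ t) x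

/-- Partial derivative of `f : ℝ → ℝ → ℝ` with respect to its second argument. -/
noncomputable def pd2 (f : ℝ → ℝ → ℝ) (x t : ℝ) : ℝ := deriv (f x) t

/-- Partial derivative of `z : ℝ → ℝ → ℝ → ℝ` with respect to its second argument. -/
noncomputable def pdy (z : ℝ → ℝ → ℝ → ℝ) (x y t : ℝ) : ℝ := deriv (fun w => z x w t) y

/-- Partial derivative of `z : ℝ → ℝ → ℝ → ℝ` with respect to its third argument. -/
noncomputable def pdt (z : ℝ → ℝ → ℝ → ℝ) (x y t : ℝ) : ℝ := deriv (z x y) t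

theorem aux_lin (l r a b c : ℝ) (f g : ℝ → ℝ) (hf : Continuous f) (hg : Continuous g) :
    ∫ x in l..r, (a * f x + b * g x + c * f x)
      = a * (∫ x in l..r, f x) + b * (∫ x in l..r, g x) + c * (∫ x in l..r, f x) := by
  have i1 : ∀ k : ℝ, IntervalIntegrable (fun x => k * f x) volume l r := fun k =>
    Continuous.intervalIntegrable (by fun_prop) l r
  have i2 : ∀ k : ℝ, IntervalIntegrable (fun x => k * g x) volume l r := fun k =>
    Continuous.intervalIntegrable (by fun_prop) l r
  have i3 : IntervalIntegrable (fun x => a * f x + b * g x) volume l r :=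
    Continuous.intervalIntegrable (by fun_prop) l r
  rw [intervalIntegral.integral_add i3 (i1 c), intervalIntegral.integral_add (i1 a) (i2 b)]
  simp only [intervalIntegral.integral_const_mul]

theorem aux_param (a b : ℝ) (G G' : ℝ → ℝ → ℝ)
    (hG : Continuous fun q : ℝ × ℝ => G q.1 q.2) (hG' : Continuous fun q : ℝ × ℝ => G' q.1 q.2)
    (hd : ∀ s x, HasDerivAt (fun r => G r x) (G' s x) s) (t : ℝ) :
    HasDerivAt (fun s => ∫ x in a..b, G s x) (∫ x in a..b, G' t x) t := by
  have hK : IsCompact (Metric.closedBall t 1 ×ˢ Set.uIcc a b) :=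
    (isCompact_closedBall t 1).prod isCompact_uIcc
  obtain ⟨C, hC⟩ := hK.exists_bound_of_continuousOn hG'.continuousOn
  refine (intervalIntegral.hasDerivAt_integral_of_dominated_loc_of_deriv_le
    (μ := volume) (F := G) (F' := G') (bound := fun _ => C) (s := Metric.ball t 1)
    (Metric.ball_mem_nhds t one_pos) ?_ ?_ ?_ ?_ ?_ ?_).2
  · exact Filter.Eventually.of_forall fun s =>
      (show Continuous (G s) from hG.comp (Continuous.prodMk_right s)).aestronglyMeasurable
  · exact (show Continuous (G t) from hG.comp (Continuous.prodMk_right t)).intervalIntegrable _ _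
  · exact (show Continuous (G' t) from hG'.comp (Continuous.prodMk_right t)).aestronglyMeasurable
  · refine Filter.Eventually.of_forall fun x hx s hs => ?_
    exact hC (s, x) ⟨Metric.ball_subset_closedBall hs, Set.uIoc_subset_uIcc hx⟩
  · exact intervalIntegrable_const
  · exact Filter.Eventually.of_forall fun x _ s _ => hd s x

/-- Lemma 4.5: the functional `J(t) = ξ̄τ(t)∫₀^L∫₀^1 e^{−2τ(t)y} z² dy dx` satisfies
`J'(t) ≤ −2J(t) + ξ̄∫₀^L v_t² dx`. -/
theorem functional_J_estimate
    (ρ μ α₁ β γ L τ₀ τ₁ d δ : ℝ)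
    (hρ : 0 < ρ) (hμ : 0 < μ) (hα₁ : 0 < α₁) (hβ : 0 < β) (hγ : 0 < γ) (hL : 0 < L)
    (hτ₀ : 0 < τ₀) (hd : d < 1) (hδ0 : 0 < δ) (hδ : δ < Real.sqrt (1 - d))
    (τ μ₁ μ₂ : ℝ → ℝ)
    -- (A1)
    (hτC1 : ContDiff ℝ 1 τ)
    (hτbd : ∀ t, 0 ≤ t → τ₀ ≤ τ t ∧ τ t ≤ τ₁)
    (hτ' : ∀ t, 0 ≤ t → deriv τ t ≤ d)
    -- (A2)
    (hμ₁C1 : ContDiff ℝ 1 μ₁)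
    (hμ₁pos : ∀ t, 0 ≤ t → 0 < μ₁ t)
    (hμ₁dec : ∀ s t, 0 ≤ s → s ≤ t → μ₁ t ≤ μ₁ s)
    -- (A3)
    (hμ₂C1 : ContDiff ℝ 1 μ₂)
    (hμ₂bd : ∀ t, 0 ≤ t → |μ₂ t| ≤ δ * μ₁ t)
    -- classical solution
    (v p : ℝ → ℝ → ℝ) (z : ℝ → ℝ → ℝ → ℝ)
    (hv : ContDiff ℝ 2 fun q : ℝ × ℝ => v q.1 q.2)
    (hp : ContDiff ℝ 2 fun q : ℝ × ℝ => p q.1 q.2)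
    (hzC1 : ContDiff ℝ 1 fun q : ℝ × ℝ × ℝ => z q.1 q.2.1 q.2.2)
    (heq1 : ∀ x ∈ Set.Icc (0:ℝ) L, ∀ t, 0 ≤ t →
      ρ * pd2 (pd2 v) x t - (α₁ + γ ^ 2 * β) * pd1 (pd1 v) x t
        + γ * β * pd1 (pd1 p) x t + μ₁ t * pd2 v x t + μ₂ t * z x 1 t = 0)
    (heq2 : ∀ x ∈ Set.Icc (0:ℝ) L, ∀ t, 0 ≤ t →
      μ * pd2 (pd2 p) x t - β * pd1 (pd1 p) x t + γ * β * pd1 (pd1 v) x t = 0)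
    (heq3 : ∀ x ∈ Set.Icc (0:ℝ) L, ∀ y ∈ Set.Icc (0:ℝ) 1, ∀ t, 0 ≤ t →
      τ t * pdt z x y t + (1 - deriv τ t * y) * pdy z x y t = 0)
    (hcomp : ∀ x ∈ Set.Icc (0:ℝ) L, ∀ t, 0 ≤ t → z x 0 t = pd2 v x t)
    (hbc : ∀ t, 0 ≤ t → v 0 t = 0 ∧ p 0 t = 0 ∧ pd1 v L t = 0 ∧ pd1 p L t = 0)
    (ξbar : ℝ) (hξbar : 0 < ξbar) :
    let J : ℝ → ℝ := fun s =>
      ξbar * τ s * ∫ x in (0:ℝ)..L, ∫ y in (0:ℝ)..1, Real.exp (-2 * τ s * y) * (z x y s) ^ 2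
    ∀ t, 0 < t →
      ∃ D : ℝ, HasDerivAt J D t ∧
        D ≤ -2 * J t + ξbar * ∫ x in (0:ℝ)..L, (pd2 v x t) ^ 2 := by
  intro J t ht
  set Z : ℝ × ℝ × ℝ → ℝ := fun q => z q.1 q.2.1 q.2.2 with hZ
  have hZd : Differentiable ℝ Z := hzC1.differentiable (by norm_num)
  have hZc : Continuous Z := hZd.continuous
  have hZf : Continuous (fderiv ℝ Z) := hzC1.continuous_fderiv (by norm_num)
  have hτd : Differentiable ℝ τ := hτC1.differentiable (by norm_num)
  have hτc : Continuous τ := hτd.continuous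
  have hτ'c : Continuous (deriv τ) := hτC1.continuous_deriv (by norm_num)
  have hzt : ∀ x y s, HasDerivAt (fun r => z x y r) (fderiv ℝ Z (x, y, s) (0, 0, 1)) s := by
    intro x y s
    have h1 : HasDerivAt (fun r : ℝ => ((x, y, r) : ℝ × ℝ × ℝ)) (0, 0, 1) s :=
      (hasDerivAt_const s x).prodMk ((hasDerivAt_const s y).prodMk (hasDerivAt_id s))
    exact (hZd (x, y, s)).hasFDerivAt.comp_hasDerivAt s h1
  have hzy : ∀ x y s, HasDerivAt (fun r => z x r s) (fderiv ℝ Z (x, y, s) (0, 1, 0)) y := by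
    intro x y s
    have h1 : HasDerivAt (fun r : ℝ => ((x, r, s) : ℝ × ℝ × ℝ)) (0, 1, 0) y :=
      (hasDerivAt_const y x).prodMk ((hasDerivAt_id y).prodMk (hasDerivAt_const y s))
    exact (hZd (x, y, s)).hasFDerivAt.comp_hasDerivAt y h1
  -- time derivative of the integrand
  let F : ℝ → ℝ → ℝ → ℝ := fun s x y => Real.exp (-2 * τ s * y) * (z x y s) ^ 2
  let F' : ℝ → ℝ → ℝ → ℝ := fun s x y =>
    Real.exp (-2 * τ s * y) * (-2 * deriv τ s * y) * (z x y s) ^ 2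
      + Real.exp (-2 * τ s * y) * (2 * z x y s * fderiv ℝ Z (x, y, s) (0, 0, 1))
  have hFd : ∀ s x y, HasDerivAt (fun r => F r x y) (F' s x y) s := by
    intro s x y
    have h1 : HasDerivAt (fun r => Real.exp (-2 * τ r * y))
        (Real.exp (-2 * τ s * y) * (-2 * deriv τ s * y)) s :=
      (((hτd s).hasDerivAt.const_mul (-2)).mul_const y).exp
    have h2 := (hzt x y s).pow 2
    refine (h1.mul h2).congr_deriv ?_
    simp only [F', Pi.pow_apply]
    push_cast
    ring
  have hzc : Continuous fun q : (ℝ × ℝ) × ℝ => z q.1.2 q.2 q.1.1 :=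
    hZc.comp (f := fun q : (ℝ × ℝ) × ℝ => (q.1.2, q.2, q.1.1)) (by fun_prop)
  have hztc : Continuous fun q : (ℝ × ℝ) × ℝ =>
      fderiv ℝ Z (q.1.2, q.2, q.1.1) (0, 0, 1) :=
    (hZf.comp (f := fun q : (ℝ × ℝ) × ℝ => (q.1.2, q.2, q.1.1)) (by fun_prop)).clm_apply
      continuous_const
  have hec : Continuous fun q : (ℝ × ℝ) × ℝ => Real.exp (-2 * τ q.1.1 * q.2) := by
    fun_prop
  have hdc : Continuous fun q : (ℝ × ℝ) × ℝ => -2 * deriv τ q.1.1 * q.2 :=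
    (continuous_const.mul (hτ'c.comp (continuous_fst.comp continuous_fst))).mul continuous_snd
  have hFc : Continuous fun q : (ℝ × ℝ) × ℝ => F q.1.1 q.1.2 q.2 := by
    exact hec.mul (hzc.pow 2)
  have hF'c : Continuous fun q : (ℝ × ℝ) × ℝ => F' q.1.1 q.1.2 q.2 := by
    exact ((hec.mul hdc).mul (hzc.pow 2)).add
      (hec.mul ((continuous_const.mul hzc).mul hztc))
  have hin : ∀ s x, HasDerivAt (fun r => ∫ y in (0:ℝ)..1, F r x y)
      (∫ y in (0:ℝ)..1, F' s x y) s := by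
    intro s x
    refine aux_param 0 1 (fun r y => F r x y) (fun r y => F' r x y) ?_ ?_
      (fun r y => hFd r x y) s
    · exact hFc.comp (f := fun q : ℝ × ℝ => ((q.1, x), q.2)) (by fun_prop)
    · exact hF'c.comp (f := fun q : ℝ × ℝ => ((q.1, x), q.2)) (by fun_prop)
  have hIc : Continuous fun q : ℝ × ℝ => ∫ y in (0:ℝ)..1, F q.1 q.2 y :=
    intervalIntegral.continuous_parametric_intervalIntegral_of_continuous'
      (f := fun (q : ℝ × ℝ) y => F q.1 q.2 y) hFc 0 1
  have hI'c : Continuous fun q : ℝ × ℝ => ∫ y in (0:ℝ)..1, F' q.1 q.2 y :=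
    intervalIntegral.continuous_parametric_intervalIntegral_of_continuous'
      (f := fun (q : ℝ × ℝ) y => F' q.1 q.2 y) hF'c 0 1
  have hout := aux_param 0 L (fun s x => ∫ y in (0:ℝ)..1, F s x y)
    (fun s x => ∫ y in (0:ℝ)..1, F' s x y) hIc hI'c hin t
  have hJ := ((hτd t).hasDerivAt.const_mul ξbar).mul hout
  refine ⟨_, hJ, ?_⟩
  have hIt : Continuous fun x => ∫ y in (0:ℝ)..1, F t x y :=
    hIc.comp (Continuous.prodMk_right t)
  have hI't : Continuous fun x => ∫ y in (0:ℝ)..1, F' t x y :=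
    hI'c.comp (Continuous.prodMk_right t)
  -- pointwise identity
  have key : ∀ x ∈ Set.Icc (0:ℝ) L,
      deriv τ t * (∫ y in (0:ℝ)..1, F t x y) + τ t * (∫ y in (0:ℝ)..1, F' t x y)
        + 2 * τ t * (∫ y in (0:ℝ)..1, F t x y) ≤ (z x 0 t) ^ 2 := by
    intro x hx
    have c1 : Continuous (F t x) :=
      hFc.comp (f := fun y : ℝ => ((t, x), y)) (by fun_prop)
    have c2 : Continuous (F' t x) :=
      hF'c.comp (f := fun y : ℝ => ((t, x), y)) (by fun_prop)
    have hftc : ∫ y in (0:ℝ)..1, (deriv τ t * F t x y + τ t * F' t x y + 2 * τ t * F t x y)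
        = -((1 - deriv τ t * 1) * F t x 1) - -((1 - deriv τ t * 0) * F t x 0) := by
      refine intervalIntegral.integral_eq_sub_of_hasDerivAt
        (f := fun y => -((1 - deriv τ t * y) * F t x y)) ?_ ?_
      · intro y hy
        rw [Set.uIcc_of_le zero_le_one] at hy
        have e3 := heq3 x hx y hy t ht.le
        have e1 : pdt z x y t = fderiv ℝ Z (x, y, t) (0, 0, 1) := (hzt x y t).deriv
        have e2 : pdy z x y t = fderiv ℝ Z (x, y, t) (0, 1, 0) := (hzy x y t).deriv
        rw [e1, e2] at e3
        have h1 : HasDerivAt (fun r => Real.exp (-2 * τ t * r))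
            (Real.exp (-2 * τ t * y) * (-2 * τ t * 1)) y :=
          ((hasDerivAt_id y).const_mul (-2 * τ t)).exp
        have h2 := h1.mul ((hzy x y t).pow 2)
        have h3 : HasDerivAt (fun r => 1 - deriv τ t * r) (-(deriv τ t * 1)) y :=
          ((hasDerivAt_id y).const_mul (deriv τ t)).const_sub 1
        refine (h3.mul h2).neg.congr_deriv ?_
        simp only [F, F', Pi.mul_apply, Pi.pow_apply]
        push_cast
        linear_combination (-2 * Real.exp (-2 * τ t * y) * z x y t) * e3
      · exact (((continuous_const.mul c1).add (continuous_const.mul c2)).add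
          (continuous_const.mul c1)).intervalIntegrable _ _
    rw [aux_lin 0 1 _ _ _ (F t x) (F' t x) c1 c2] at hftc
    rw [hftc]
    have h0 : F t x 0 = (z x 0 t) ^ 2 := by simp [F]
    have h1 : 0 ≤ F t x 1 := by simp only [F]; positivity
    have h2 := hτ' t ht.le
    rw [h0]
    nlinarith [mul_nonneg (by linarith : 0 ≤ 1 - deriv τ t) h1]
  have hz0c : Continuous fun x => (z x 0 t) ^ 2 :=
    (hZc.comp (f := fun x : ℝ => (x, (0:ℝ), t)) (by fun_prop)).pow 2
  have hcl : Continuous fun x => deriv τ t * (∫ y in (0:ℝ)..1, F t x y)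
      + τ t * (∫ y in (0:ℝ)..1, F' t x y) + 2 * τ t * (∫ y in (0:ℝ)..1, F t x y) :=
    ((continuous_const.mul hIt).add (continuous_const.mul hI't)).add (continuous_const.mul hIt)
  have hmono := intervalIntegral.integral_mono_on (μ := volume) hL.le
    (hcl.intervalIntegrable 0 L) (hz0c.intervalIntegrable 0 L) key
  rw [aux_lin 0 L _ _ _ (fun x => ∫ y in (0:ℝ)..1, F t x y)
    (fun x => ∫ y in (0:ℝ)..1, F' t x y) hIt hI't] at hmono
  have hv0 : ∫ x in (0:ℝ)..L, (z x 0 t) ^ 2 = ∫ x in (0:ℝ)..L, (pd2 v x t) ^ 2 := by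
    refine intervalIntegral.integral_congr fun x hx => ?_
    rw [Set.uIcc_of_le hL.le] at hx
    simp only [hcomp x hx t ht.le]
  rw [hv0] at hmono
  have hJt : J t = ξbar * τ t * ∫ x in (0:ℝ)..L, ∫ y in (0:ℝ)..1, F t x y := rfl
  rw [hJt]
  have := mul_le_mul_of_nonneg_left hmono hξbar.le
  linarith
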